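/- Assume Σ_{j∈ℤ} r(j)² < ∞. Then for each k ∈ {1,…,q/2} the series Σ_{j∈ℤ} (r(j)/r(0))^{2k} converges, and lim_{n→∞} E[U_{f_q,n}(Z)²] = u_{f_q}(Z) := Σ_{k=1}^{q/2} d_{2k}² (2k)! Σ_{j∈ℤ} (r(j)/r(0))^{2k} < ∞. -/

import Mathlib

open MeasureTheory ProbabilityTheory Filter
open scoped NNReal ENNReal

noncomputable section

variable {Ω : Type*} [MeasureSpace Ω]

/-- `Z` is a centered stationary Gaussian sequence with covariance `r`. -/
def IsCSG (Z : ℤ → Ω → ℝ) (r : ℤ → ℝ) : Prop :=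
  (∀ k, Measurable (Z k)) ∧
  (∀ (s : Finset ℤ) (a : ℤ → ℝ), ∃ v : ℝ≥0,
    Measure.map (fun ω => ∑ k ∈ s, a k * Z k ω) (ℙ : Measure Ω) = gaussianReal 0 v) ∧
  (∀ j k : ℤ, ∫ ω, Z j ω * Z k ω = r (k - j)) ∧
  0 < r 0

/-- `m`-th probabilists' Hermite polynomial, as a function on `ℝ`. -/
def hermiteFun (m : ℕ) (x : ℝ) : ℝ := Polynomial.aeval x (Polynomial.hermite m)

/-- The polynomial `f_q(x) = ∑_{k=0}^{q/2} d_{2k} He_{2k}(x/√r0)`. -/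
def fpoly (r0 : ℝ) (d : ℕ → ℝ) (q : ℕ) (x : ℝ) : ℝ :=
  ∑ k ∈ Finset.range (q / 2 + 1), d (2 * k) * hermiteFun (2 * k) (x / Real.sqrt r0)

/-- Polynomial variation `Q_{f,n}(X)`. -/
def Qvar (f : ℝ → ℝ) (X : ℤ → Ω → ℝ) (n : ℕ) (ω : Ω) : ℝ :=
  (1 / (n : ℝ)) * ∑ i ∈ Finset.range n, f (X (i : ℤ) ω)

/-- `λ_f(X) = E[f(X_0)]`. -/
def lamE (f : ℝ → ℝ) (X : ℤ → Ω → ℝ) : ℝ := ∫ ω, f (X 0 ω)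

/-- `U_{f,n}(X) = √n (Q_{f,n}(X) − λ_f(X))`. -/
def Ustat (f : ℝ → ℝ) (X : ℤ → Ω → ℝ) (n : ℕ) (ω : Ω) : ℝ :=
  Real.sqrt n * (Qvar f X n ω - lamE f X)

/-- Variance of `U_{f,n}(X)`. -/
def varU (f : ℝ → ℝ) (X : ℤ → Ω → ℝ) (n : ℕ) : ℝ := ∫ ω, (Ustat f X n ω) ^ 2

/-- Standardized statistic `F_{f,n}(X)`. -/
def Fstat (f : ℝ → ℝ) (X : ℤ → Ω → ℝ) (n : ℕ) (ω : Ω) : ℝ :=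
  Ustat f X n ω / Real.sqrt (varU f X n)

/-- fourth cumulant `κ₄(X) = E[X⁴] − 3 (E[X²])²` of a centered random variable. -/
def kappa4 (X : Ω → ℝ) : ℝ := (∫ ω, X ω ^ 4) - 3 * (∫ ω, X ω ^ 2) ^ 2

/-- third cumulant `κ₃(X) = E[X³]`. -/
def kappa3 (X : Ω → ℝ) : ℝ := ∫ ω, X ω ^ 3

/-- `u_{f_q}(Z) = ∑_{k=1}^{q/2} d_{2k}² (2k)! ∑_{j∈ℤ} (r(j)/r(0))^{2k}`. -/
def ufq (r : ℤ → ℝ) (d : ℕ → ℝ) (q : ℕ) : ℝ :=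
  ∑ k ∈ Finset.Icc 1 (q / 2),
    (d (2 * k)) ^ 2 * (Nat.factorial (2 * k)) * ∑' j : ℤ, (r j / r 0) ^ (2 * k)

/-- Total variation distance between two laws on `ℝ`. -/
def dTV (μ ν : Measure ℝ) : ℝ :=
  ⨆ A : {A : Set ℝ // MeasurableSet A}, |(μ A.1).toReal - (ν A.1).toReal|

/-- Wasserstein distance between two laws on `ℝ`. -/
def dW (μ ν : Measure ℝ) : ℝ :=
  ⨆ f : {f : ℝ → ℝ // LipschitzWith 1 f}, |(∫ x, f.1 x ∂μ) - ∫ x, f.1 x ∂ν|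

/-- The quadratic function `f₂(x) = x²`. -/
def f2 : ℝ → ℝ := fun x => x ^ 2

/-- `U_{f₂,n}(X) = √n (Q_{f₂,n}(X) − r(0))`, quadratic case. -/
def U2 (X : ℤ → Ω → ℝ) (r0 : ℝ) (n : ℕ) (ω : Ω) : ℝ :=
  Real.sqrt n * (Qvar f2 X n ω - r0)

/-- Variance of `U_{f₂,n}`. -/
def varU2 (X : ℤ → Ω → ℝ) (r0 : ℝ) (n : ℕ) : ℝ := ∫ ω, (U2 X r0 n ω) ^ 2

/-- Standardized quadratic statistic `F_{f₂,n}`. -/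
def F2stat (X : ℤ → Ω → ℝ) (r0 : ℝ) (n : ℕ) (ω : Ω) : ℝ :=
  U2 X r0 n ω / Real.sqrt (varU2 X r0 n)

/-- `p`-th order finite difference of a sequence of processes. -/
def fdiff : ℕ → (ℤ → Ω → ℝ) → (ℤ → Ω → ℝ)
  | 0, Z => Z
  | (p + 1), Z => fun k ω => fdiff p Z (k + 1) ω - fdiff p Z k ω

/-!
For a centered Gaussian pair `(X, Y)` of unit variances, write `Y = β X + W` with `W` independent
of `X`. Gaussian integration by parts in `X` with `W` frozen, together with
`He_{m+1}(x) = x He_m(x) - He_m'(x)`, lowers both degrees in `E[He_m(X) He_n(Y)]` by one and yields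
`δ_{mn} m! cov(X, Y)^m`. Hence `f_q(Z_i)` and `f_q(Z_j)` have covariance `γ(j - i)` with
`γ(k) = ∑_{m ≥ 1} c_m² m! (r(k)/r(0))^m`. Splitting the square `[0, n)²` into the hooks
`max i j = l` turns `∑_{i,j < n} γ(j - i)` into `∑_{l < n} ∑_{|k| ≤ l} γ(k)`, so the variance of
`U_{f_q,n}` is a Cesàro mean of the symmetric partial sums of `∑ γ(k)`. The latter series is
absolutely convergent, since `|r(k)/r(0)|` is eventually below `1` and therefore its powers
of degree at least two are dominated by its square.
-/

section GaussianIntegrals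

open Polynomial

variable {S : Type*} {mS : MeasurableSpace S} {P : Measure S} {X Y W : S → ℝ}
  {R : Type*} [CommSemiring R] [Algebra R ℝ]

theorem memLp_aeval_of_hasGaussianLaw (hX : HasGaussianLaw X P) (p : R[X]) {k : ℝ≥0∞}
    (hk : k ≠ ∞) : MemLp (fun ω => aeval (X ω) p) k P := by
  have := hX.isProbabilityMeasure
  have memLp_pow (n : ℕ) : MemLp (fun ω => X ω ^ n) k P := by
    rcases eq_or_ne n 0 with rfl | hn
    · simpa only [pow_zero] using memLp_const (1 : ℝ)
    · have h := (hX.memLp (p := k * n) (by finiteness)).norm_rpow_div (n : ℝ≥0∞)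
      have hdiv : k * n / n = k := ENNReal.mul_div_cancel_right (by simpa) (by simp)
      rw [hdiv] at h
      refine h.of_le (hX.aemeasurable.pow_const n).aestronglyMeasurable (ae_of_all _ fun ω => ?_)
      simp
  simp only [aeval_eq_sum_range, Algebra.smul_def]
  exact memLp_finsetSum _ fun n _ => (memLp_pow n).const_mul _

theorem integrable_aeval_mul_aeval (hX : HasGaussianLaw X P) (hY : HasGaussianLaw Y P)
    (p q : R[X]) : Integrable (fun ω => aeval (X ω) p * aeval (Y ω) q) P :=
  (memLp_aeval_of_hasGaussianLaw hX p (k := 2) (by simp)).integrable_mul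
    (memLp_aeval_of_hasGaussianLaw hY q (k := 2) (by simp))

theorem integrable_mul_aeval_mul_aeval (hX : HasGaussianLaw X P) (hY : HasGaussianLaw Y P)
    (p q : R[X]) : Integrable (fun ω => X ω * (aeval (X ω) p * aeval (Y ω) q)) P := by
  refine (integrable_aeval_mul_aeval hX hY (.X * p) q).congr (ae_of_all _ fun ω => ?_)
  simp only [map_mul, aeval_X, mul_assoc]

theorem hasDerivAt_gaussianPDFReal (m : ℝ) (v : ℝ≥0) (x : ℝ) :
    HasDerivAt (gaussianPDFReal m v) (-((x - m) / v) * gaussianPDFReal m v x) x := by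
  have hexponent : HasDerivAt (fun x => -(x - m) ^ 2 / (2 * v)) (-((x - m) / v)) x := by
    refine ((((hasDerivAt_id x).sub_const m).fun_pow 2).fun_neg.div_const
      (2 * (v : ℝ))).congr_deriv ?_
    rcases eq_or_ne (v : ℝ) 0 with hv | hv
    · simp [hv]
    · simp [field]
  refine (hexponent.exp.const_mul (√(2 * Real.pi * v))⁻¹).congr_deriv ?_
  rw [gaussianPDFReal]
  ring

theorem integral_sub_mul_gaussianReal {m : ℝ} {v : ℝ≥0} {f f' : ℝ → ℝ}
    (hf : ∀ x, HasDerivAt f (f' x) x) (hint : Integrable f (gaussianReal m v))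
    (hmul : Integrable (fun x => (x - m) * f x) (gaussianReal m v))
    (hint' : Integrable f' (gaussianReal m v)) :
    ∫ x, (x - m) * f x ∂gaussianReal m v = v * ∫ x, f' x ∂gaussianReal m v := by
  rcases eq_or_ne v 0 with rfl | hv
  · simp
  have hv' : (v : ℝ) ≠ 0 := by simpa
  have integrable_density {g : ℝ → ℝ} (hg : Integrable g (gaussianReal m v)) :
      Integrable (fun x => gaussianPDFReal m v x * g x) := by
    rw [gaussianReal_of_var_ne_zero m hv, integrable_withDensity_iff_integrable_smul'
      (by fun_prop) (ae_of_all _ fun _ => gaussianPDF_lt_top)] at hg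
    simpa only [toReal_gaussianPDF, smul_eq_mul] using hg
  have hderiv (x : ℝ) : HasDerivAt (fun x => gaussianPDFReal m v x * f x)
      (gaussianPDFReal m v x * (f' x - (v : ℝ)⁻¹ * ((x - m) * f x))) x :=
    ((hasDerivAt_gaussianPDFReal m v x).fun_mul (hf x)).congr_deriv (by ring)
  have hzero := integral_eq_zero_of_hasDerivAt_of_integrable hderiv
    (integrable_density (hint'.sub (hmul.const_mul _))) (integrable_density hint)
  simp only [← smul_eq_mul (a := gaussianPDFReal _ _ _),
    ← integral_gaussianReal_eq_integral_smul hv] at hzero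
  rw [integral_sub hint' (hmul.const_mul _), integral_const_mul] at hzero
  field_simp at hzero
  linarith

theorem integral_fst_sub_mul_gaussianReal_prod {m : ℝ} {v : ℝ≥0} {ν : Measure ℝ} [SFinite ν]
    {f f' : ℝ × ℝ → ℝ} (hf : ∀ x w, HasDerivAt (fun x => f (x, w)) (f' (x, w)) x)
    (hint : Integrable f ((gaussianReal m v).prod ν))
    (hmul : Integrable (fun z => (z.1 - m) * f z) ((gaussianReal m v).prod ν))
    (hint' : Integrable f' ((gaussianReal m v).prod ν)) :
    ∫ z, (z.1 - m) * f z ∂(gaussianReal m v).prod ν = v * ∫ z, f' z ∂(gaussianReal m v).prod ν := by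
  rw [integral_prod_symm _ hmul, integral_prod_symm _ hint', ← integral_const_mul]
  refine integral_congr_ae ?_
  filter_upwards [hint.prod_left_ae, hmul.prod_left_ae, hint'.prod_left_ae] with w h hm h'
  exact integral_sub_mul_gaussianReal (hf · w) h hm h'

theorem integral_sub_mul_of_indepFun [IsProbabilityMeasure P] {m : ℝ} {v : ℝ≥0}
    (hX : HasLaw X (gaussianReal m v) P) (hW : AEMeasurable W P) (h : X ⟂ᵢ[P] W)
    {f f' : ℝ × ℝ → ℝ} (hf : ∀ x w, HasDerivAt (fun x => f (x, w)) (f' (x, w)) x)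
    (hfc : Continuous f) (hfc' : Continuous f') (hint : Integrable (fun ω => f (X ω, W ω)) P)
    (hmul : Integrable (fun ω => (X ω - m) * f (X ω, W ω)) P)
    (hint' : Integrable (fun ω => f' (X ω, W ω)) P) :
    ∫ ω, (X ω - m) * f (X ω, W ω) ∂P = v * ∫ ω, f' (X ω, W ω) ∂P := by
  have hlaw : HasLaw (fun ω => (X ω, W ω)) ((gaussianReal m v).prod (P.map W)) P :=
    h.hasLaw_prod hX ⟨hW, rfl⟩
  have integral_law {g : ℝ × ℝ → ℝ} (hg : Continuous g) :=
    hlaw.integral_comp hg.aestronglyMeasurable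
  have integrable_law {g : ℝ × ℝ → ℝ} (hg : Continuous g)
      (hgi : Integrable (fun ω => g (X ω, W ω)) P) :
      Integrable g ((gaussianReal m v).prod (P.map W)) := by
    rwa [← hlaw.map_eq, integrable_map_measure hg.aestronglyMeasurable hlaw.aemeasurable]
  have hfm : Continuous fun z : ℝ × ℝ => (z.1 - m) * f z := by fun_prop
  have hprod := integral_fst_sub_mul_gaussianReal_prod hf (integrable_law hfc hint)
    (integrable_law hfm hmul) (integrable_law hfc' hint')
  rwa [← integral_law hfm, ← integral_law hfc'] at hprod

theorem covariance_eq_zero_of_variance_eq_zero [IsProbabilityMeasure P] (hX : MemLp X 2 P)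
    (hvar : Var[X; P] = 0) : cov[X, Y; P] = 0 := by
  refine integral_eq_zero_of_ae ?_
  filter_upwards [ae_eq_integral_of_variance_eq_zero hX hvar] with ω hω
  simp [hω]

theorem exists_indepFun_sub_const_mul (h : HasGaussianLaw (fun ω => (X ω, Y ω)) P) :
    ∃ β : ℝ, cov[X, Y; P] = β * Var[X; P] ∧ X ⟂ᵢ[P] fun ω => Y ω - β * X ω := by
  have := h.isProbabilityMeasure
  have hX := h.fst.memLp_two
  have hY := h.snd.memLp_two
  obtain ⟨β, hβ⟩ : ∃ β, cov[X, Y; P] = β * Var[X; P] := by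
    rcases eq_or_ne Var[X; P] 0 with h0 | h0
    · exact ⟨0, by rw [covariance_eq_zero_of_variance_eq_zero hX h0, zero_mul]⟩
    · exact ⟨cov[X, Y; P] / Var[X; P], (div_mul_cancel₀ _ h0).symm⟩
  refine ⟨β, hβ, HasGaussianLaw.indepFun_of_covariance_eq_zero ?_ ?_⟩
  · exact h.map_fun ((ContinuousLinearMap.fst ℝ ℝ ℝ).prod
      (ContinuousLinearMap.snd ℝ ℝ ℝ - β • ContinuousLinearMap.fst ℝ ℝ ℝ))
  · rw [covariance_fun_sub_right hX hY (hX.const_mul _), covariance_const_mul_right,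
      covariance_self h.fst.aemeasurable, ← hβ, sub_self]

theorem integral_sub_integral_mul_aeval_mul_aeval (h : HasGaussianLaw (fun ω => (X ω, Y ω)) P)
    (p q : R[X]) :
    ∫ ω, (X ω - ∫ ω, X ω ∂P) * (aeval (X ω) p * aeval (Y ω) q) ∂P =
      Var[X; P] * ∫ ω, aeval (X ω) (derivative p) * aeval (Y ω) q ∂P +
        cov[X, Y; P] * ∫ ω, aeval (X ω) p * aeval (Y ω) (derivative q) ∂P := by
  have := h.isProbabilityMeasure
  obtain ⟨β, hβ, hindep⟩ := exists_indepFun_sub_const_mul h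
  let f (z : ℝ × ℝ) := aeval z.1 p * aeval (β * z.1 + z.2) q
  let f' (z : ℝ × ℝ) := aeval z.1 (derivative p) * aeval (β * z.1 + z.2) q +
    β * (aeval z.1 p * aeval (β * z.1 + z.2) (derivative q))
  have hf (x w : ℝ) : HasDerivAt (fun x => f (x, w)) (f' (x, w)) x := by
    have hlin : HasDerivAt (fun x => β * x + w) β x := by
      simpa using ((hasDerivAt_id x).const_mul β).add_const w
    refine ((p.hasDerivAt_aeval x).fun_mul
      ((q.hasDerivAt_aeval (β * x + w)).comp x hlin)).congr_deriv ?_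
    simp only [f', Function.comp_apply]
    ring
  have hpq := integrable_aeval_mul_aeval h.fst h.snd p q
  have hp'q := integrable_aeval_mul_aeval h.fst h.snd (derivative p) q
  have hpq' := integrable_aeval_mul_aeval h.fst h.snd p (derivative q)
  have hXpq : Integrable (fun ω => (X ω - ∫ ω, X ω ∂P) * (aeval (X ω) p * aeval (Y ω) q)) P := by
    simpa only [sub_mul, Pi.sub_def] using
      (integrable_mul_aeval_mul_aeval h.fst h.snd p q).sub (hpq.const_mul _)
  have hY (ω : S) : β * X ω + (Y ω - β * X ω) = Y ω := by ring
  have hstein := integral_sub_mul_of_indepFun (W := fun ω => Y ω - β * X ω)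
    ⟨h.fst.aemeasurable, h.fst.map_eq_gaussianReal⟩
    (h.snd.aemeasurable.sub (h.fst.aemeasurable.const_mul β)) hindep hf (by fun_prop) (by fun_prop)
    (by simpa [f, hY] using hpq) (by simpa [f, hY] using hXpq)
    (by simpa only [f', hY, Pi.add_def] using hp'q.add (hpq'.const_mul β))
  simp only [f, f', hY] at hstein
  rw [hstein, integral_add hp'q (hpq'.const_mul β), integral_const_mul,
    Real.coe_toNNReal _ (variance_nonneg X P), hβ]
  ring

end GaussianIntegrals

section Hermite

open Polynomial

theorem derivative_hermite_succ (n : ℕ) :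
    derivative (hermite (n + 1)) = (n + 1 : ℤ[X]) * hermite n := by
  induction n with
  | zero => simp
  | succ n ih =>
    rw [hermite_succ (n + 1), derivative_sub, derivative_mul, derivative_X, ih, derivative_mul,
      hermite_succ n]
    simp only [one_mul, derivative_add, derivative_natCast, derivative_one, add_zero, zero_mul,
      zero_add, Nat.cast_add, Nat.cast_one]
    ring

variable {S : Type*} {mS : MeasurableSpace S} {P : Measure S} {X Y : S → ℝ}

theorem hermiteFun_succ (n : ℕ) (x : ℝ) :
    hermiteFun (n + 1) x = x * hermiteFun n x - aeval x (derivative (hermite n)) := by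
  simp only [hermiteFun, hermite_succ, map_sub, map_mul, aeval_X]

theorem integral_hermiteFun_succ_mul_aeval (h : HasGaussianLaw (fun ω => (X ω, Y ω)) P)
    (hX : ∫ ω, X ω ∂P = 0) (hvar : Var[X; P] = 1) (m : ℕ) (q : ℤ[X]) :
    ∫ ω, hermiteFun (m + 1) (X ω) * aeval (Y ω) q ∂P =
      cov[X, Y; P] * ∫ ω, hermiteFun m (X ω) * aeval (Y ω) (derivative q) ∂P := by
  have hparts := integral_sub_integral_mul_aeval_mul_aeval h (hermite m) q
  simp only [hX, hvar, sub_zero, one_mul] at hparts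
  simp only [hermiteFun_succ, sub_mul, mul_assoc]
  simp only [hermiteFun]
  rw [integral_sub (integrable_mul_aeval_mul_aeval h.fst h.snd _ q)
    (integrable_aeval_mul_aeval h.fst h.snd _ q), hparts, add_sub_cancel_left]

theorem integral_hermiteFun_eq_zero (hX : HasGaussianLaw X P) (hmean : ∫ ω, X ω ∂P = 0)
    (hvar : Var[X; P] = 1) {m : ℕ} (hm : m ≠ 0) : ∫ ω, hermiteFun m (X ω) ∂P = 0 := by
  obtain ⟨m, rfl⟩ := Nat.exists_eq_succ_of_ne_zero hm
  have hXX : HasGaussianLaw (fun ω => (X ω, X ω)) P :=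
    hX.map_fun ((ContinuousLinearMap.id ℝ ℝ).prod (.id ℝ ℝ))
  simpa using integral_hermiteFun_succ_mul_aeval hXX hmean hvar m 1

theorem integral_hermiteFun_mul_hermiteFun (h : HasGaussianLaw (fun ω => (X ω, Y ω)) P)
    (hX : ∫ ω, X ω ∂P = 0) (hvarX : Var[X; P] = 1) (hY : ∫ ω, Y ω ∂P = 0) (hvarY : Var[Y; P] = 1)
    (m n : ℕ) :
    ∫ ω, hermiteFun m (X ω) * hermiteFun n (Y ω) ∂P =
      if m = n then m.factorial * cov[X, Y; P] ^ m else 0 := by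
  have := h.isProbabilityMeasure
  induction m generalizing n with
  | zero =>
    rcases eq_or_ne n 0 with rfl | hn
    · simp [hermiteFun]
    · simpa [hermiteFun, hn.symm] using integral_hermiteFun_eq_zero h.snd hY hvarY hn
  | succ m ih =>
    have hstep := integral_hermiteFun_succ_mul_aeval h hX hvarX m (hermite n)
    cases n with
    | zero => simpa [hermiteFun] using hstep
    | succ n =>
      have hcalc : ∫ ω, hermiteFun (m + 1) (X ω) * hermiteFun (n + 1) (Y ω) ∂P =
          cov[X, Y; P] * ((n + 1) * ∫ ω, hermiteFun m (X ω) * hermiteFun n (Y ω) ∂P) := by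
        rw [← integral_const_mul]
        refine hstep.trans (congrArg _ (integral_congr_ae (ae_of_all _ fun ω => ?_)))
        simp only [derivative_hermite_succ, hermiteFun, map_mul, map_add, map_natCast, map_one]
        ring
      rw [hcalc, ih]
      rcases eq_or_ne m n with rfl | hmn
      · simp only [↓reduceIte, Nat.factorial_succ, Nat.cast_mul, Nat.cast_add, Nat.cast_one,
          pow_succ]
        ring
      · simp [hmn]

theorem memLp_hermiteFun (hX : HasGaussianLaw X P) (m : ℕ) :
    MemLp (fun ω => hermiteFun m (X ω)) 2 P :=
  memLp_aeval_of_hasGaussianLaw hX (hermite m) (by simp)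

theorem covariance_hermiteFun_hermiteFun (h : HasGaussianLaw (fun ω => (X ω, Y ω)) P)
    (hX : ∫ ω, X ω ∂P = 0) (hvarX : Var[X; P] = 1) (hY : ∫ ω, Y ω ∂P = 0) (hvarY : Var[Y; P] = 1)
    {m n : ℕ} (hm : m ≠ 0) :
    cov[fun ω => hermiteFun m (X ω), fun ω => hermiteFun n (Y ω); P] =
      if m = n then m.factorial * cov[X, Y; P] ^ m else 0 := by
  have := h.isProbabilityMeasure
  rw [covariance_eq_sub (memLp_hermiteFun h.fst m) (memLp_hermiteFun h.snd n),
    integral_hermiteFun_eq_zero h.fst hX hvarX hm, zero_mul, sub_zero]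
  exact integral_hermiteFun_mul_hermiteFun h hX hvarX hY hvarY m n

end Hermite

section HermiteExpansion

/-- The finite Hermite expansion `∑ m ∈ s, c_m He_m(x/√r0)`, the expansion of a polynomial of a
centered Gaussian variable of variance `r0`. -/
def hermiteExpansion (r0 : ℝ) (c : ℕ → ℝ) (s : Finset ℕ) (x : ℝ) : ℝ :=
  ∑ m ∈ s, c m * hermiteFun m (x / √r0)

theorem continuous_hermiteExpansion (r0 : ℝ) (c : ℕ → ℝ) (s : Finset ℕ) :
    Continuous (hermiteExpansion r0 c s) := by
  unfold hermiteExpansion hermiteFun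
  fun_prop

variable {S : Type*} {mS : MeasurableSpace S} {P : Measure S} {X Y : S → ℝ}

theorem memLp_const_mul_hermiteFun_div (hX : HasGaussianLaw X P) (r0 a : ℝ) (m : ℕ) :
    MemLp (fun ω => a * hermiteFun m (X ω / √r0)) 2 P :=
  (memLp_hermiteFun (by simpa [div_eq_inv_mul] using hX.fun_smul (√r0)⁻¹) m).const_mul a

theorem memLp_hermiteExpansion (hX : HasGaussianLaw X P) (r0 : ℝ) (c : ℕ → ℝ) (s : Finset ℕ) :
    MemLp (fun ω => hermiteExpansion r0 c s (X ω)) 2 P :=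
  memLp_finsetSum _ fun m _ => memLp_const_mul_hermiteFun_div hX r0 (c m) m

theorem covariance_hermiteFun_div_hermiteFun_div (h : HasGaussianLaw (fun ω => (X ω, Y ω)) P)
    (hX : ∫ ω, X ω ∂P = 0) (hY : ∫ ω, Y ω ∂P = 0) {r0 : ℝ} (hr0 : 0 < r0)
    (hvarX : Var[X; P] = r0) (hvarY : Var[Y; P] = r0) (m n : ℕ) :
    cov[fun ω => hermiteFun m (X ω / √r0), fun ω => hermiteFun n (Y ω / √r0); P] =
      if m = n ∧ m ≠ 0 then m.factorial * (cov[X, Y; P] / r0) ^ m else 0 := by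
  have := h.isProbabilityMeasure
  rcases eq_or_ne m 0 with rfl | hm
  · simp [hermiteFun]
  have hpair : HasGaussianLaw (fun ω => (X ω / √r0, Y ω / √r0)) P := by
    simpa [div_eq_inv_mul] using h.fun_smul (√r0)⁻¹
  have variance_div {W : S → ℝ} (hW : Var[W; P] = r0) : Var[fun ω => W ω / √r0; P] = 1 := by
    simp only [div_eq_inv_mul]
    rw [variance_const_mul, hW, inv_pow, Real.sq_sqrt hr0.le, inv_mul_cancel₀ hr0.ne']
  have hcov : cov[fun ω => X ω / √r0, fun ω => Y ω / √r0; P] = cov[X, Y; P] / r0 := by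
    rw [covariance_fun_div_left, covariance_fun_div_right, div_div, Real.mul_self_sqrt hr0.le]
  rw [covariance_hermiteFun_hermiteFun hpair (by rw [integral_div, hX, zero_div])
    (variance_div hvarX) (by rw [integral_div, hY, zero_div]) (variance_div hvarY) hm, hcov]
  simp [hm]

theorem covariance_hermiteExpansion (h : HasGaussianLaw (fun ω => (X ω, Y ω)) P)
    (hX : ∫ ω, X ω ∂P = 0) (hY : ∫ ω, Y ω ∂P = 0) {r0 : ℝ} (hr0 : 0 < r0)
    (hvarX : Var[X; P] = r0) (hvarY : Var[Y; P] = r0) (c : ℕ → ℝ) (s : Finset ℕ) :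
    cov[fun ω => hermiteExpansion r0 c s (X ω), fun ω => hermiteExpansion r0 c s (Y ω); P] =
      ∑ m ∈ s.erase 0, c m ^ 2 * m.factorial * (cov[X, Y; P] / r0) ^ m := by
  have := h.isProbabilityMeasure
  unfold hermiteExpansion
  rw [covariance_fun_sum_fun_sum' (fun m _ => memLp_const_mul_hermiteFun_div h.fst r0 (c m) m)
    (fun m _ => memLp_const_mul_hermiteFun_div h.snd r0 (c m) m)]
  simp only [covariance_const_mul_left, covariance_const_mul_right,
    covariance_hermiteFun_div_hermiteFun_div h hX hY hr0 hvarX hvarY]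
  rw [← Finset.filter_ne', Finset.sum_filter]
  refine Finset.sum_congr rfl fun m hm => ?_
  rw [Finset.sum_eq_single_of_mem m hm fun n _ hn => by simp [hn.symm]]
  rcases eq_or_ne m 0 with rfl | hm0
  · simp
  · simp only [hm0, ne_eq, not_false_eq_true, and_self, if_true]
    ring

end HermiteExpansion

theorem sum_Icc_neg_natCast {M : Type*} [AddCommGroup M] (g : ℤ → M) (n : ℕ) :
    ∑ k ∈ Finset.Icc (-(n : ℤ)) n, g k =
      (∑ i ∈ Finset.range n, g (n - i)) + (∑ i ∈ Finset.range n, g (i - n)) + g 0 := by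
  induction n with
  | zero => simp
  | succ n ih =>
    push_cast
    rw [Finset.sum_Icc_succ_eq_add_endpoints, ih, Finset.sum_range_succ', Finset.sum_range_succ']
    simp only [Nat.cast_add, Nat.cast_one, add_sub_add_right_eq_sub, Nat.cast_zero, sub_zero,
      zero_sub]
    abel

theorem sum_range_sum_range_sub {M : Type*} [AddCommGroup M] (g : ℤ → M) (n : ℕ) :
    ∑ i ∈ Finset.range n, ∑ j ∈ Finset.range n, g (j - i) =
      ∑ m ∈ Finset.range n, ∑ k ∈ Finset.Icc (-(m : ℤ)) m, g k := by
  induction n with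
  | zero => simp
  | succ n ih =>
    rw [Finset.sum_range_succ (fun m : ℕ => ∑ k ∈ Finset.Icc (-(m : ℤ)) m, g k), ← ih,
      sum_Icc_neg_natCast]
    simp only [Finset.sum_range_succ, Finset.sum_add_distrib, sub_self]
    abel

theorem tendsto_inv_mul_sum_range_sum_range_sub {g : ℤ → ℝ} {s : ℝ} (hg : HasSum g s) :
    Tendsto (fun n : ℕ => (n : ℝ)⁻¹ * ∑ i ∈ Finset.range n, ∑ j ∈ Finset.range n, g (j - i))
      atTop (nhds s) := by
  simp only [sum_range_sum_range_sub]
  exact (hg.comp Finset.tendsto_Icc_neg).cesaro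

theorem summable_pow_of_summable_abs_pow {ι : Type*} {g : ι → ℝ} {p m : ℕ}
    (hg : Summable fun j => |g j| ^ p) (hpm : p ≤ m) : Summable fun j => g j ^ m := by
  refine hg.of_norm_bounded_eventually ?_
  filter_upwards [hg.tendsto_cofinite_zero.eventually_lt_const one_pos] with j hj
  have hle : |g j| ≤ 1 := not_lt.mp fun h => hj.not_ge (one_le_pow₀ h.le)
  rw [norm_pow, Real.norm_eq_abs]
  exact pow_le_pow_of_le_one (abs_nonneg _) hle hpm

section Variation

variable {X : ℤ → Ω → ℝ} {f : ℝ → ℝ}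

theorem varU_eq_inv_mul_sum_covariance [IsProbabilityMeasure (ℙ : Measure Ω)]
    (hf : ∀ i, MemLp (fun ω => f (X i ω)) 2 ℙ) (hmean : ∀ i, ∫ ω, f (X i ω) = lamE f X) (n : ℕ) :
    varU f X n = (n : ℝ)⁻¹ * ∑ i ∈ Finset.range n, ∑ j ∈ Finset.range n,
      cov[fun ω => f (X i ω), fun ω => f (X j ω); ℙ] := by
  rcases eq_or_ne n 0 with rfl | hn
  · simp [varU, Ustat]
  have hn' : (n : ℝ) ≠ 0 := by exact_mod_cast hn
  have hQ : MemLp (Qvar f X n) 2 ℙ :=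
    (memLp_finsetSum (Finset.range n) fun (i : ℕ) _ => hf i).const_mul (1 / (n : ℝ))
  have hQmean : ∫ ω, Qvar f X n ω = lamE f X := by
    simp only [Qvar]
    rw [integral_const_mul, integral_finsetSum _ fun (i : ℕ) _ => (hf i).integrable one_le_two]
    simp [hmean, hn']
  have hUmean : ∫ ω, Ustat f X n ω = 0 := by
    simp only [Ustat]
    rw [integral_const_mul, integral_sub (hQ.integrable one_le_two) (integrable_const _), hQmean,
      integral_const, probReal_univ, one_smul, sub_self, mul_zero]
  have hU : AEMeasurable (Ustat f X n) := (hQ.aemeasurable.sub_const _).const_mul _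
  calc varU f X n = Var[Ustat f X n; ℙ] := (variance_of_integral_eq_zero hU hUmean).symm
    _ = n * Var[Qvar f X n; ℙ] := by
        unfold Ustat
        rw [variance_const_mul, Real.sq_sqrt n.cast_nonneg,
          variance_sub_const hQ.aestronglyMeasurable]
    _ = n * ((1 / n) ^ 2 * Var[fun ω => ∑ i ∈ Finset.range n, f (X i ω); ℙ]) := by
        unfold Qvar
        rw [variance_const_mul]
    _ = (n : ℝ)⁻¹ * ∑ i ∈ Finset.range n, ∑ j ∈ Finset.range n,
          cov[fun ω => f (X i ω), fun ω => f (X j ω); ℙ] := by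
        rw [variance_fun_sum' fun (i : ℕ) _ => hf i]
        field_simp

theorem tendsto_varU [IsProbabilityMeasure (ℙ : Measure Ω)] {γ : ℤ → ℝ} {s : ℝ}
    (hf : ∀ i, MemLp (fun ω => f (X i ω)) 2 ℙ) (hmean : ∀ i, ∫ ω, f (X i ω) = lamE f X)
    (hcov : ∀ i j, cov[fun ω => f (X i ω), fun ω => f (X j ω); ℙ] = γ (j - i)) (hγ : HasSum γ s) :
    Tendsto (fun n => varU f X n) atTop (nhds s) := by
  simp only [varU_eq_inv_mul_sum_covariance hf hmean, hcov]
  exact tendsto_inv_mul_sum_range_sum_range_sub hγ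

end Variation

namespace IsCSG

variable {Z : ℤ → Ω → ℝ} {r : ℤ → ℝ}

theorem isGaussianProcess (hZ : IsCSG Z r) : IsGaussianProcess Z ℙ where
  hasGaussianLaw I := by
    have hmeas : Measurable fun ω => I.restrict (Z · ω) :=
      measurable_pi_lambda _ fun k => hZ.1 k
    refine ⟨isGaussian_of_map_eq_gaussianReal fun L => ?_⟩
    let a (k : ℤ) : ℝ := if h : k ∈ I then L (fun l => if ⟨k, h⟩ = l then 1 else 0) else 0
    have hL (ω : Ω) : L (I.restrict (Z · ω)) = ∑ k ∈ I, a k * Z k ω := by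
      rw [← Finset.sum_coe_sort]
      refine (L.toLinearMap.pi_apply_eq_sum_univ _).trans (Finset.sum_congr rfl fun k _ => ?_)
      simp [a, mul_comm]
    obtain ⟨v, hv⟩ := hZ.2.1 I a
    refine ⟨0, v, ?_⟩
    rw [Measure.map_map (by fun_prop) hmeas, ← hv]
    exact congrArg (Measure.map · ℙ) (funext hL)

theorem hasLaw (hZ : IsCSG Z r) (k : ℤ) : HasLaw (Z k) (gaussianReal 0 (r 0).toNNReal) ℙ where
  aemeasurable := (hZ.1 k).aemeasurable
  map_eq := by
    obtain ⟨v, hv⟩ := hZ.2.1 {k} 1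
    simp only [Finset.sum_singleton, Pi.one_apply, one_mul] at hv
    have hlaw : HasLaw (Z k) (gaussianReal 0 v) ℙ := ⟨(hZ.1 k).aemeasurable, hv⟩
    have hmean : ∫ ω, Z k ω = 0 := by
      rw [hlaw.integral_eq, integral_id_gaussianReal]
    have hvar : (v : ℝ) = r 0 := by
      rw [← variance_id_gaussianReal (μ := 0), ← hlaw.variance_eq,
        variance_of_integral_eq_zero hlaw.aemeasurable hmean, ← sub_self k, ← hZ.2.2.1]
      simp only [sq]
    rw [← hvar, Real.toNNReal_coe]
    exact hv

theorem integral_eq_zero (hZ : IsCSG Z r) (k : ℤ) : ∫ ω, Z k ω = 0 := by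
  rw [(hZ.hasLaw k).integral_eq, integral_id_gaussianReal]

theorem variance_eq (hZ : IsCSG Z r) (k : ℤ) : Var[Z k; ℙ] = r 0 := by
  rw [(hZ.hasLaw k).variance_eq, variance_id_gaussianReal, Real.coe_toNNReal _ hZ.2.2.2.le]

theorem covariance_eq (hZ : IsCSG Z r) (j k : ℤ) : cov[Z j, Z k; ℙ] = r (k - j) := by
  simp only [covariance, hZ.integral_eq_zero, sub_zero, hZ.2.2.1]

theorem integral_comp_eq_lamE (hZ : IsCSG Z r) {f : ℝ → ℝ} (hf : Measurable f) (k : ℤ) :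
    ∫ ω, f (Z k ω) = lamE f Z :=
  ((hZ.hasLaw k).integral_comp hf.aestronglyMeasurable).trans
    ((hZ.hasLaw 0).integral_comp hf.aestronglyMeasurable).symm

end IsCSG

theorem statement_1_general {Z : ℤ → Ω → ℝ} {r : ℤ → ℝ} (hZ : IsCSG Z r) (c : ℕ → ℝ)
    (s : Finset ℕ) {p : ℕ} (hp : ∀ m ∈ s.erase 0, p ≤ m) (hr : Summable fun j => |r j| ^ p) :
    (∀ m ∈ s.erase 0, Summable fun j => (r j / r 0) ^ m) ∧
      Tendsto (varU (hermiteExpansion (r 0) c s) Z) atTop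
        (nhds (∑ m ∈ s.erase 0, c m ^ 2 * m.factorial * ∑' j, (r j / r 0) ^ m)) := by
  have hG := hZ.isGaussianProcess
  have : IsProbabilityMeasure (ℙ : Measure Ω) := hG.isProbabilityMeasure
  have hnormalized : Summable fun j => |r j / r 0| ^ p := by
    simpa only [abs_div, div_pow] using hr.div_const (|r 0| ^ p)
  have hsummable (m : ℕ) (hm : m ∈ s.erase 0) : Summable fun j => (r j / r 0) ^ m :=
    summable_pow_of_summable_abs_pow hnormalized (hp m hm)
  refine ⟨hsummable, tendsto_varU
    (fun i => memLp_hermiteExpansion (hG.hasGaussianLaw_eval i) (r 0) c s)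
    (hZ.integral_comp_eq_lamE (continuous_hermiteExpansion (r 0) c s).measurable) (fun i j => ?_)
    (hasSum_sum fun m hm => (hsummable m hm).hasSum.mul_left (c m ^ 2 * m.factorial))⟩
  rw [covariance_hermiteExpansion hG.hasGaussianLaw_prodMk (hZ.integral_eq_zero i)
    (hZ.integral_eq_zero j) hZ.2.2.2 (hZ.variance_eq i) (hZ.variance_eq j), hZ.covariance_eq]

/-- The degrees `0, 2, …, 2⌊q/2⌋` of the Hermite polynomials occurring in `fpoly`. -/
def evenDegrees (q : ℕ) : Finset ℕ := (Finset.range (q / 2 + 1)).image (2 * ·)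

theorem fpoly_eq_hermiteExpansion (r0 : ℝ) (d : ℕ → ℝ) (q : ℕ) :
    fpoly r0 d q = hermiteExpansion r0 d (evenDegrees q) := by
  funext x
  rw [fpoly, hermiteExpansion, evenDegrees,
    Finset.sum_image (mul_right_injective₀ two_ne_zero).injOn]

theorem evenDegrees_erase_zero (q : ℕ) :
    (evenDegrees q).erase 0 = (Finset.Icc 1 (q / 2)).image (2 * ·) := by
  have hrange : (Finset.range (q / 2 + 1)).erase 0 = Finset.Icc 1 (q / 2) := by grind
  rw [← hrange, Finset.image_erase (mul_right_injective₀ two_ne_zero), mul_zero, evenDegrees]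

theorem forall_mem_evenDegrees_erase_zero {q : ℕ} {A : ℕ → Prop} :
    (∀ m ∈ (evenDegrees q).erase 0, A m) ↔ ∀ k ∈ Finset.Icc 1 (q / 2), A (2 * k) := by
  rw [evenDegrees_erase_zero, Finset.forall_mem_image]

theorem ufq_eq_sum_evenDegrees (r : ℤ → ℝ) (d : ℕ → ℝ) (q : ℕ) :
    ufq r d q = ∑ m ∈ (evenDegrees q).erase 0, d m ^ 2 * m.factorial * ∑' j, (r j / r 0) ^ m := by
  rw [ufq, evenDegrees_erase_zero, Finset.sum_image (mul_right_injective₀ two_ne_zero).injOn]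

/-- under `∑_{j∈ℤ} r(j)² < ∞`, the series defining `u_{f_q}(Z)`
converge and `E[U_{f_q,n}(Z)²] → u_{f_q}(Z)`. -/
theorem statement_1
    {Ω : Type*} [MeasureSpace Ω] [IsProbabilityMeasure (ℙ : Measure Ω)]
    (Z : ℤ → Ω → ℝ) (r : ℤ → ℝ) (hZ : IsCSG Z r)
    (q : ℕ) (hq : 0 < q) (hqe : q % 2 = 0)
    (d : ℕ → ℝ) (hd : d q = r 0 ^ (q / 2))
    (hsum : Summable fun j : ℤ => (r j) ^ 2) :
    (∀ k ∈ Finset.Icc 1 (q / 2), Summable fun j : ℤ => (r j / r 0) ^ (2 * k)) ∧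
      Filter.Tendsto (fun n : ℕ => varU (fpoly (r 0) d q) Z n) Filter.atTop
        (nhds (ufq r d q)) := by
  rw [fpoly_eq_hermiteExpansion, ufq_eq_sum_evenDegrees]
  exact (statement_1_general (p := 2) hZ d _ (forall_mem_evenDegrees_erase_zero.mpr (by grind))
    (by simpa only [sq_abs] using hsum)).imp_left forall_mem_evenDegrees_erase_zero.mp

end
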